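/- Let q ≥ 3, n ≥ 1, and let x ∈ (ZMod q)ⁿ and d ∈ {0,1}ⁿ, so that x, x+d, …, x+(q−1)d is a restricted arithmetic progression. Define W(y) := (w₁(y) − 2⌊n/(2q)⌋, …, w_{q−1}(y) − 2⌊n/(2q)⌋) ∈ ℤ^{q−1} for y ∈ (ZMod q)ⁿ. Then the arrangement (W(x), W(x+d), …, W(x+(q−1)d)) ∈ ℤ^{q(q−1)} is feasible over ℤ; that is, writing w⁽ʲ⁾ := W(x+(j−1)d), for every j = 3, …, q one has w₁⁽ʲ⁾ = Σ_{a=1}^{q−1} w_a⁽ʲ⁻²⁾ − Σ_{a=2}^{q−1} w_a⁽ʲ⁻¹⁾, and for every a = 2, …, q−1, w_a⁽ʲ⁾ = −w_{a−1}⁽ʲ⁻²⁾ + w_{a−1}⁽ʲ⁻¹⁾ + w_a⁽ʲ⁻¹⁾ (equations in ℤ). -/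

import Mathlib

/-!
Write `wt y b` for the number of coordinates of `y` equal to `b ∈ ZMod q`, and `y_j = x + j d`.
Everything follows from the four-term relation
`wt y_{j+2} (b+1) + wt y_j b = wt y_{j+1} b + wt y_{j+1} (b+1)`, valid for every `b ∈ ZMod q`
(`wt_progression`). It holds coordinate by coordinate: where `d i = 0` the three points agree,
and where `d i = 1` each condition on `y_{j+2}` or `y_{j+1}` is a condition on `y_j` shifted by one.
For `b ≠ 0` this is the second feasibility equation, the shifts `2⌊n/(2q)⌋` cancelling.
For `b = 0` it becomes the first one after `wt y 0` is eliminated through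
`∑ b, wt y b = n` (`wt_zero_add_sum`).
-/

/-- Feasibility of an arrangement (0-indexed: `w j a` is the paper's `w_{a+1}⁽ʲ⁺¹⁾`). -/
def Feasible (q : ℕ) {M : Type*} [AddCommGroup M] (w : Fin q → Fin (q - 1) → M) : Prop :=
  ∀ (j : ℕ) (hj : j + 2 < q),
    (w ⟨j + 2, hj⟩ ⟨0, by omega⟩ =
      (∑ a : Fin (q - 1), w ⟨j, by omega⟩ a) -
        ∑ a ∈ Finset.univ.filter (fun a : Fin (q - 1) => 1 ≤ (a : ℕ)),
          w ⟨j + 1, by omega⟩ a) ∧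
    ∀ (a : ℕ) (ha : a + 1 < q - 1),
      w ⟨j + 2, hj⟩ ⟨a + 1, ha⟩ =
        - w ⟨j, by omega⟩ ⟨a, by omega⟩ + w ⟨j + 1, by omega⟩ ⟨a, by omega⟩ +
          w ⟨j + 1, by omega⟩ ⟨a + 1, ha⟩

/-- The weight tuple `W(y) = (w₁(y) − 2⌊n/2q⌋, …, w_{q−1}(y) − 2⌊n/2q⌋) ∈ ℤ^{q-1}`,
0-indexed: `Wtuple q n y a = w_{a+1}(y) − 2⌊n/(2q)⌋`. -/
def Wtuple (q n : ℕ) (y : Fin n → ZMod q) (a : Fin (q - 1)) : ℤ :=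
  ((Finset.univ.filter fun i => y i = (((a : ℕ) + 1 : ℕ) : ZMod q)).card : ℤ) -
    2 * ((n / (2 * q) : ℕ) : ℤ)

/-- The number of coordinates of `y` equal to `b`, as an integer; unlike `Wtuple` it is not
shifted, and `b = 0` is allowed. -/
def wt {q n : ℕ} (y : Fin n → ZMod q) (b : ZMod q) : ℤ :=
  ((Finset.univ.filter fun i => y i = b).card : ℤ)

lemma wt_eq_sum {q n : ℕ} (y : Fin n → ZMod q) (b : ZMod q) :
    wt y b = ∑ i, if y i = b then 1 else 0 := by
  simp [wt]

lemma wt_progression {q n : ℕ} (x d : Fin n → ZMod q) (hd : ∀ i, d i = 0 ∨ d i = 1)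
    (j : ℕ) (b : ZMod q) :
    wt (fun i => x i + ((j + 2 : ℕ) : ZMod q) * d i) (b + 1) +
        wt (fun i => x i + (j : ZMod q) * d i) b =
      wt (fun i => x i + ((j + 1 : ℕ) : ZMod q) * d i) b +
        wt (fun i => x i + ((j + 1 : ℕ) : ZMod q) * d i) (b + 1) := by
  simp only [wt_eq_sum, ← Finset.sum_add_distrib]
  refine Finset.sum_congr rfl fun i _ => ?_
  rcases hd i with h | h
  · simp only [h, mul_zero, add_zero]
    ring
  · have h1 : x i + ((j + 2 : ℕ) : ZMod q) * 1 = b + 1 ↔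
        x i + ((j + 1 : ℕ) : ZMod q) * 1 = b := by
      rw [← add_left_inj (1 : ZMod q) (b := x i + ((j + 1 : ℕ) : ZMod q) * 1)]
      push_cast
      ring_nf
    have h2 : x i + ((j + 1 : ℕ) : ZMod q) * 1 = b + 1 ↔ x i + (j : ZMod q) * 1 = b := by
      rw [← add_left_inj (1 : ZMod q) (b := x i + (j : ZMod q) * 1)]
      push_cast
      ring_nf
    simp only [h, h1, h2]

lemma wt_zero_add_sum {q n : ℕ} (hq : 1 ≤ q) (y : Fin n → ZMod q) :
    wt y 0 + ∑ a : Fin (q - 1), wt y (((a : ℕ) + 1 : ℕ) : ZMod q) = n := by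
  obtain ⟨m, rfl⟩ : ∃ m, q = m + 1 := ⟨q - 1, by omega⟩
  have key : ∑ b : ZMod (m + 1), wt y b = n := by
    simp only [wt_eq_sum]
    rw [Finset.sum_comm]
    simp
  rw [← key]
  -- `ZMod (m + 1)` is definitionally `Fin (m + 1)`.
  refine Eq.trans ?_ (Fin.sum_univ_succ (n := m) (fun b => wt y b)).symm
  refine congrArg₂ _ rfl (Finset.sum_congr rfl fun a _ => congrArg _ ?_)
  have h := ZMod.natCast_zmod_val (n := m + 1) (Fin.succ a)
  exact h

lemma Wtuple_eq (q n : ℕ) (y : Fin n → ZMod q) (a : Fin (q - 1)) :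
    Wtuple q n y a = wt y (((a : ℕ) + 1 : ℕ) : ZMod q) - 2 * ((n / (2 * q) : ℕ) : ℤ) := rfl

lemma sum_Wtuple {q n : ℕ} (hq : 1 ≤ q) (y : Fin n → ZMod q) :
    ∑ a, Wtuple q n y a = n - wt y 0 - ((q : ℤ) - 1) * (2 * ((n / (2 * q) : ℕ) : ℤ)) := by
  simp only [Wtuple_eq, Finset.sum_sub_distrib, Finset.sum_const, Finset.card_univ,
    Fintype.card_fin, nsmul_eq_mul, Nat.cast_sub hq, Nat.cast_one]
  linarith [wt_zero_add_sum hq y]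

lemma sum_filter_one_le {m : ℕ} (hm : 0 < m) (f : Fin m → ℤ) :
    ∑ a ∈ Finset.univ.filter (fun a : Fin m => 1 ≤ (a : ℕ)), f a = ∑ a, f a - f ⟨0, hm⟩ := by
  have h : Finset.univ.filter (fun a : Fin m => 1 ≤ (a : ℕ)) =
      Finset.univ.erase ⟨0, hm⟩ := by
    ext a
    simp [Fin.ext_iff, Nat.one_le_iff_ne_zero]
  rw [h, Finset.sum_erase_eq_sub (Finset.mem_univ _)]

theorem stmt11 (q n : ℕ) (hq : 3 ≤ q) (hn : 1 ≤ n)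
    (x d : Fin n → ZMod q) (hd : ∀ i, d i = 0 ∨ d i = 1) :
    Feasible q (fun j : Fin q => Wtuple q n (fun i => x i + (j.val : ZMod q) * d i)) := by
  intro j hj
  constructor
  · have h := wt_progression x d hd j 0
    rw [sum_filter_one_le (by omega), sum_Wtuple (by omega), sum_Wtuple (by omega)]
    simp only [Wtuple_eq, zero_add, Nat.cast_one] at h ⊢
    linarith
  · intro a ha
    have h := wt_progression x d hd j ((a + 1 : ℕ) : ZMod q)
    rw [← Nat.cast_succ] at h
    simp only [Wtuple_eq, Nat.succ_eq_add_one] at h ⊢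
    linarith
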